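/- Let w be an admissible word over Ω whose base turtle run from the state (0, 1) visits pairwise distinct positions (the sequence consisting of 0 together with the position after each letter of w belonging to {A, B} is injective; i.e., the folding curve described by w is non-self-intersecting). Then no word obtained from CreateLeft(w) by finitely many one-step reductions contains two consecutive letters v. -/

import Mathlib

/-!
Read a word over Γ as a walk on the square lattice: each letter turns the heading
(`R` right, `L` left, `s` straight, `v` a half turn) and then makes one step; one more step in
the initial heading comes before the first letter. The entries of the reduction table say exactly
that the spur `p → q → p` in the walk is deleted.

`CreateLeft w` is the walk obtained from the folding curve (scaled by `1 - i`) by replacing each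
edge by two half-diagonals through the centre of the face on its left. Hence every second
position of this walk is a vertex of the curve, and these positions are pairwise distinct
(`gpos_createLeft`). Deleting a spur removes two consecutive positions, so it preserves parity
of indices and the list of every second position only shrinks to a sublist
(`StepRed.gpos_sublist`). Finally, a factor `vv` would make the walk visit `p, q, p, q`
consecutively, repeating a position of each parity (`no_vv_of_nodup`).
-/

open Complex

/-- The folding alphabet Ω = {A, B, +, -}. -/
inductive OmegaLetter : Type
  | A | B | plus | minus
deriving DecidableEq

/-- Admissible words over Ω: letters from {A,B} and from {+,-} strictly alternate,
consecutive {A,B}-letters are distinct, and the word begins and ends with a letter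
from {A,B}. -/
inductive Admissible : List OmegaLetter → Prop
  | single (X : OmegaLetter) (hX : X = OmegaLetter.A ∨ X = OmegaLetter.B) :
      Admissible [X]
  | cons (X s Y : OmegaLetter) (w : List OmegaLetter)
      (hX : X = OmegaLetter.A ∨ X = OmegaLetter.B)
      (hs : s = OmegaLetter.plus ∨ s = OmegaLetter.minus)
      (hXY : X ≠ Y) (h : Admissible (Y :: w)) :
      Admissible (X :: s :: Y :: w)

/-- The base turtle step for words over Ω: A and B update p ↦ p + d;
+ updates d ↦ -i·d; - updates d ↦ i·d. -/
noncomputable def baseStep : OmegaLetter → ℂ × ℂ → ℂ × ℂ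
  | .A, (p, d) => (p + d, d)
  | .B, (p, d) => (p + d, d)
  | .plus, (p, d) => (p, -I * d)
  | .minus, (p, d) => (p, I * d)

/-- The positions of the base turtle run after each letter belonging to {A, B}. -/
noncomputable def basePositions : List OmegaLetter → ℂ × ℂ → List ℂ
  | [], _ => []
  | x :: rest, st =>
      match x with
      | .A => (baseStep x st).1 :: basePositions rest (baseStep x st)
      | .B => (baseStep x st).1 :: basePositions rest (baseStep x st)
      | _ => basePositions rest (baseStep x st)

/-- The boundary alphabet Γ = {L, R, s, v}. -/
inductive GammaLetter : Type
  | L | R | s | v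
deriving DecidableEq

/-- CreateLeft maps words over Ω to words over Γ letterwise by
A ↦ R, B ↦ R, + ↦ s, - ↦ v. -/
def CreateLeft : List OmegaLetter → List GammaLetter :=
  List.map fun x => match x with
    | OmegaLetter.A => GammaLetter.R
    | OmegaLetter.B => GammaLetter.R
    | OmegaLetter.plus => GammaLetter.s
    | OmegaLetter.minus => GammaLetter.v

/-- The reduction table: RvR ↦ s, LvL ↦ s, RvL ↦ v, LvR ↦ v, svR ↦ L, svL ↦ R,
Rvs ↦ L, Lvs ↦ R, svs ↦ v.  (`Red X Y` is the value on the triple X v Y.) -/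
def Red : GammaLetter → GammaLetter → GammaLetter
  | .R, .R => .s
  | .L, .L => .s
  | .R, .L => .v
  | .L, .R => .v
  | .s, .R => .L
  | .s, .L => .R
  | .R, .s => .L
  | .L, .s => .R
  | .s, .s => .v
  | _, _ => .v

/-- One-step reduction: replace a factor X v Y (X, Y ∈ {L, R, s}) by Red(XvY). -/
def StepRed (w w' : List GammaLetter) : Prop :=
  ∃ (u t : List GammaLetter) (X Y : GammaLetter),
    (X = GammaLetter.L ∨ X = GammaLetter.R ∨ X = GammaLetter.s) ∧
    (Y = GammaLetter.L ∨ Y = GammaLetter.R ∨ Y = GammaLetter.s) ∧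
    w = u ++ [X, GammaLetter.v, Y] ++ t ∧
    w' = u ++ [Red X Y] ++ t

/-- The rotation of the heading effected by a letter of Γ. -/
noncomputable def turn : GammaLetter → ℂ
  | .L => I
  | .R => -I
  | .s => 1
  | .v => -1

/-- Every second position of the walk along a word over Γ; the flag says whether the position
after the next letter is recorded. -/
noncomputable def gpos : Bool → List GammaLetter → ℂ → ℂ → List ℂ
  | _, [], _, _ => []
  | true, x :: r, p, d => (p + turn x * d) :: gpos false r (p + turn x * d) (turn x * d)
  | false, x :: r, p, d => gpos true r (p + turn x * d) (turn x * d)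

theorem turn_red {X Y : GammaLetter}
    (hX : X = GammaLetter.L ∨ X = GammaLetter.R ∨ X = GammaLetter.s)
    (hY : Y = GammaLetter.L ∨ Y = GammaLetter.R ∨ Y = GammaLetter.s) :
    turn (Red X Y) = -(turn X * turn Y) := by
  rcases hX with rfl | rfl | rfl <;> rcases hY with rfl | rfl | rfl <;> simp [Red, turn]

theorem StepRed.gpos_sublist {w w' : List GammaLetter} (h : StepRed w w') (b : Bool) (p d : ℂ) :
    (gpos b w' p d).Sublist (gpos b w p d) := by
  obtain ⟨u, t, X, Y, hX, hY, rfl, rfl⟩ := h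
  -- `h1`: the spur returns to `q`; `h2`: the heading after it is the one given by `Red X Y`.
  have key : ∀ c q e, (gpos c (Red X Y :: t) q e).Sublist
      (gpos c (X :: GammaLetter.v :: Y :: t) q e) := by
    intro c q e
    have h1 : q + turn X * e + turn GammaLetter.v * (turn X * e) = q := by
      simp [turn]
    have h2 : turn Y * (turn GammaLetter.v * (turn X * e)) = turn (Red X Y) * e := by
      rw [turn_red hX hY]; simp only [turn]; ring
    cases c
    · simp only [gpos, h1, h2]
      exact List.sublist_cons_self _ _
    · simp only [gpos, h1, h2]
      exact List.sublist_cons_self _ _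
  rw [List.append_assoc, List.append_assoc]
  induction u generalizing b p d with
  | nil => simpa using key b p d
  | cons x r ih =>
    cases b
    · simpa only [List.cons_append, gpos] using ih _ _ _
    · simpa only [List.cons_append, gpos] using (ih _ _ _).cons_cons _

/-- The head added to the list is the last position recorded before the walk starts: the
current position, or the one a step earlier if the next position is to be recorded. -/
theorem no_vv_of_nodup (w : List GammaLetter) : ∀ (b : Bool) (p d : ℂ),
    ((if b then p - d else p) :: gpos b w p d).Nodup →
    ¬ [GammaLetter.v, GammaLetter.v] <:+: w := by
  induction w with
  | nil => intro b p d _ h; simp at h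
  | cons x r ih =>
    intro b p d hn h
    rcases List.infix_cons_iff.1 h with h | h
    · obtain ⟨t, ht⟩ := h
      simp only [List.cons_append, List.nil_append, List.cons.injEq] at ht
      obtain ⟨rfl, rfl⟩ := ht
      cases b <;> simp [gpos, turn, sub_eq_add_neg] at hn
    · cases b
      · refine ih true (p + turn x * d) (turn x * d) ?_ h
        simpa [gpos] using hn
      · refine ih false (p + turn x * d) (turn x * d) ?_ h
        simpa only [gpos, Bool.false_eq_true, if_false] using hn.of_cons

/-- A curve vertex `p` corresponds to the walk position `(1 - I) * p`; the walk is started at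
the midpoint of the two steps that replace the first edge. -/
theorem gpos_createLeft {w : List OmegaLetter} (h : Admissible w) : ∀ p d : ℂ,
    gpos true (CreateLeft w) ((1 - I) * p + d) d
      = (basePositions w (p, d)).map ((1 - I) * ·) := by
  induction h with
  | single X hX =>
    intro p d
    rcases hX with rfl | rfl <;> simp [CreateLeft, gpos, basePositions, baseStep, turn] <;> ring
  | cons X s Y w hX hs hXY h ih =>
    intro p d
    have hR : (1 - I) * p + d + -I * d = (1 - I) * (p + d) := by ring
    rcases hs with rfl | rfl
    · have hC : CreateLeft (X :: OmegaLetter.plus :: Y :: w)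
          = GammaLetter.R :: GammaLetter.s :: CreateLeft (Y :: w) := by
        rcases hX with rfl | rfl <;> rfl
      have hB : basePositions (X :: OmegaLetter.plus :: Y :: w) (p, d)
          = (p + d) :: basePositions (Y :: w) (p + d, -I * d) := by
        rcases hX with rfl | rfl <;> rfl
      simp only [hC, hB, gpos, turn, hR, one_mul, ih, List.map_cons]
    · have hC : CreateLeft (X :: OmegaLetter.minus :: Y :: w)
          = GammaLetter.R :: GammaLetter.v :: CreateLeft (Y :: w) := by
        rcases hX with rfl | rfl <;> rfl
      have hB : basePositions (X :: OmegaLetter.minus :: Y :: w) (p, d)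
          = (p + d) :: basePositions (Y :: w) (p + d, I * d) := by
        rcases hX with rfl | rfl <;> rfl
      simp only [hC, hB, gpos, turn, hR, show -1 * (-I * d) = I * d by ring, ih, List.map_cons]

/-- If w is admissible and the base turtle run of w from (0, 1) visits pairwise
distinct positions (the folding curve is non-self-intersecting), then no word
obtained from CreateLeft(w) by finitely many one-step reductions contains two
consecutive letters v. -/
theorem no_double_v (w : List OmegaLetter) (hadm : Admissible w)
    (hinj : List.Nodup ((0 : ℂ) :: basePositions w (0, 1)))
    (w' : List GammaLetter)
    (h : Relation.ReflTransGen StepRed (CreateLeft w) w') :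
    ¬ [GammaLetter.v, GammaLetter.v] <:+: w' := by
  have hsub : (gpos true w' 1 1).Sublist (gpos true (CreateLeft w) 1 1) := by
    induction h with
    | refl => exact List.Sublist.refl _
    | tail _ hstep ih => exact (hstep.gpos_sublist true 1 1).trans ih
  have h1 : (1 - I : ℂ) ≠ 0 := by
    intro h0
    simpa using congrArg Complex.re h0
  have hn := hinj.map (mul_right_injective₀ h1)
  have hg := gpos_createLeft hadm 0 1
  rw [mul_zero, zero_add] at hg
  rw [List.map_cons, ← hg] at hn
  refine no_vv_of_nodup w' true 1 1 ?_
  simpa using (hsub.cons_cons 0).nodup (by simpa using hn)
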